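/- Let σ be a fixed-point-free shuffle of {1,…,n} with parameter k and Lorenz vector ⟨p₁^{q₁}, …, p_s^{q₁}⟩ (so p₁ < … < p_s = n − k and q₁ + … + q_s = k). For 2 ≤ p ≤ p_s, let ρ_p denote the p-cycle on {1,…,p_s} sending 1 ↦ p and i ↦ i − 1 for 2 ≤ i ≤ p, and fixing all i > p. Set τ = ρ_{p₁}^{q₁} ∘ ρ_{p₂}^{q₂} ∘ ⋯ ∘ ρ_{p_s}^{q_s}, a permutation of {1,…,p_s}. Then the number of orbits of the cyclic group generated by σ acting on {1,…,n} equals the number of orbits of the cyclic group generated by τ acting on {1,…,p_s}. (This is the equality of the number of components of the Lorenz link of σ and of the T-link T((p₁,q₁),…,(p_s,q_s)), which are isotopic by the Birman–Kofman correspondence.) -/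

import Mathlib

/-- `σ` is a shuffle of `{1,…,n}` with parameter `k` (encoded 0-based on `Fin n`). -/
def IsShuffle {n : ℕ} (k : ℕ) (σ : Equiv.Perm (Fin n)) : Prop :=
  1 ≤ k ∧ k < n ∧
    (∀ i j : Fin n, i < j → (j : ℕ) < k → σ i < σ j) ∧
    (∀ i j : Fin n, i < j → k ≤ (i : ℕ) → σ i < σ j)

/-- `σ` has no fixed points. -/
def FixedPointFree {n : ℕ} (σ : Equiv.Perm (Fin n)) : Prop :=
  ∀ i, σ i ≠ i

/-- The number of orbits of the cyclic group generated by `σ` acting on `Fin n`,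
i.e. the number of equivalence classes of the "same cycle" relation of `σ`. -/
def numOrbits {n : ℕ} (σ : Equiv.Perm (Fin n)) : ℕ :=
  (Finset.univ.image fun i : Fin n =>
    Finset.univ.filter fun j : Fin n => σ.SameCycle i j).card

/-- The cycle `ρ_p` on `{1,…,m}` (for `p ≤ m`) sending `1 ↦ p`, `i ↦ i - 1` for
`2 ≤ i ≤ p`, and fixing all `i > p`; 0-based on `Fin m` it sends `0 ↦ p - 1`,
`i ↦ i - 1` for `1 ≤ i < p`, and fixes `i ≥ p`. -/
def rho (m p : ℕ) (h : p ≤ m) : Equiv.Perm (Fin m) :=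
  Equiv.Perm.extendDomain (finRotate p).symm
    (⟨fun i => ⟨⟨(i : ℕ), lt_of_lt_of_le i.isLt h⟩, i.isLt⟩,
      fun x => ⟨(x : Fin m), x.2⟩, fun _ => rfl, fun _ => rfl⟩ :
      Fin p ≃ {x : Fin m // (x : ℕ) < p})

/-!
Write `n = k + m` and let the right block be the last `m` positions. A fixed-point-free shuffle `σ`
moves every left position strictly to the right, so every `σ`-orbit meets the right block, and the
orbits of `σ` are those of its first return map to this block. That first return map is `τ`: remove
the left positions `0, 1, …, k - 1` from their cycles one after the other. The arcs of the right
block stay increasing up to relabelling, and removing position `i`, which is sent to `i + d`,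
relabels them by the cycle `ρ_d`, because `i` is then the smallest of their values and exactly `d`
of these values lie below `i + d`.
-/

open Equiv Equiv.Perm Finset

section CycleCount

variable {α β : Type*}

lemma sameCycle_map_of_forall_apply {σ : Perm α} {τ : Perm β} {g : α → β}
    (hg : ∀ x, τ.SameCycle (g x) (g (σ x))) {x y : α} (hxy : σ.SameCycle x y) :
    τ.SameCycle (g x) (g y) := by
  obtain ⟨i, rfl⟩ := hxy
  induction i with
  | zero => exact .refl _ _
  | succ i ih =>
    rw [add_comm, zpow_one_add, Perm.mul_apply]
    exact ih.trans (hg _)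
  | pred i ih =>
    refine ih.trans ?_
    have hstep := hg ((σ ^ (-(i : ℤ) - 1)) x)
    rw [← Perm.mul_apply, ← zpow_one_add, add_sub_cancel] at hstep
    exact hstep.symm

lemma numOrbits_eq_card_quotient {n : ℕ} (σ : Perm (Fin n)) :
    numOrbits σ = Nat.card (Quotient (SameCycle.setoid σ)) := by
  set orbit : Fin n → Finset (Fin n) := fun i => {j | σ.SameCycle i j} with horbit
  have hker : Setoid.ker orbit = SameCycle.setoid σ := by
    ext a b
    change orbit a = orbit b ↔ σ.SameCycle a b
    refine ⟨fun h => ?_, fun h => ?_⟩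
    · have hb : b ∈ orbit a := h ▸ by simp [horbit, SameCycle.refl]
      simpa [horbit] using hb
    · ext j
      simpa [horbit] using ⟨h.symm.trans, h.trans⟩
  rw [← hker, Nat.card_congr (Setoid.quotientKerEquivRange orbit), Nat.card_coe_set_eq,
    ← Set.image_univ, ← coe_univ, ← coe_image, Set.ncard_coe_finset, numOrbits]

/-- The first point of the forward `f`-orbit `x, f x, f (f x), …` that lies in `s`. -/
noncomputable def firstVisit (f : α → α) (s : Set α) (h : ∀ x, ∃ j, f^[j] x ∈ s) (x : α) : α :=
  open Classical in f^[Nat.find (h x)] x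

section FirstVisit

variable {f : α → α} {s : Set α} (h : ∀ x, ∃ j, f^[j] x ∈ s)

lemma firstVisit_mem (x : α) : firstVisit f s h x ∈ s := by
  classical exact Nat.find_spec (h x)

lemma firstVisit_of_mem {x : α} (hx : x ∈ s) : firstVisit f s h x = x := by
  classical
  have hfind : Nat.find (h x) = 0 := (Nat.find_eq_zero _).2 hx
  rw [firstVisit, hfind, Function.iterate_zero_apply]

lemma firstVisit_apply_of_notMem {x : α} (hx : x ∉ s) :
    firstVisit f s h (f x) = firstVisit f s h x := by
  classical
  have hfind : Nat.find (h x) = Nat.find (h (f x)) + 1 := Nat.find_comp_succ (h x) (h (f x)) hx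
  rw [firstVisit, firstVisit, hfind, Function.iterate_succ_apply]

end FirstVisit

lemma sameCycle_firstVisit {σ : Perm α} {s : Set α} (h : ∀ x, ∃ j, σ^[j] x ∈ s) (x : α) :
    σ.SameCycle (firstVisit σ s h x) x := by
  rw [firstVisit, iterate_eq_pow, sameCycle_pow_left]

lemma card_quotient_eq_of_firstVisit {σ : Perm α} {τ : Perm β} {e : β → α}
    (he : Function.Injective e) (h : ∀ x, ∃ j, σ^[j] x ∈ Set.range e)
    (hτ : ∀ r, e (τ r) = firstVisit σ (Set.range e) h (σ (e r))) :
    Nat.card (Quotient (SameCycle.setoid σ)) = Nat.card (Quotient (SameCycle.setoid τ)) := by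
  choose g hg using firstVisit_mem h
  have hge (r : β) : g (e r) = r :=
    he ((hg _).trans (firstVisit_of_mem h ⟨r, rfl⟩))
  have heg (x : α) : σ.SameCycle (e (g x)) x := hg x ▸ sameCycle_firstVisit h x
  have hgσ (x : α) : τ.SameCycle (g x) (g (σ x)) := by
    by_cases hx : x ∈ Set.range e
    · obtain ⟨r, rfl⟩ := hx
      have hgσe : g (σ (e r)) = τ r := he ((hg _).trans (hτ r).symm)
      rw [hge, hgσe, sameCycle_apply_right]
    · have hgσx : g (σ x) = g x := he (by rw [hg, hg, firstVisit_apply_of_notMem h hx])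
      rw [hgσx]
  have heτ (r : β) : σ.SameCycle (e r) (e (τ r)) := by
    rw [hτ]
    exact ((sameCycle_firstVisit h _).trans (sameCycle_apply_left.2 (.refl _ _))).symm
  refine Nat.card_congr ⟨Quotient.map g fun _ _ => sameCycle_map_of_forall_apply hgσ,
    Quotient.map e fun _ _ => sameCycle_map_of_forall_apply heτ, ?_, ?_⟩
  · rintro ⟨x⟩
    exact Quotient.sound (heg x)
  · rintro ⟨r⟩
    exact congrArg _ (hge r)

lemma exists_iterate_mem_of_lt_apply [Preorder α] [WellFoundedGT α] {f : α → α} {s : Set α}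
    (hf : ∀ x ∉ s, x < f x) (x : α) : ∃ j, f^[j] x ∈ s := by
  induction x using WellFoundedGT.induction with
  | ind x ih =>
    by_cases hx : x ∈ s
    · exact ⟨0, hx⟩
    · obtain ⟨j, hj⟩ := ih (f x) (hf x hx)
      exact ⟨j + 1, hj⟩

end CycleCount

section TLink

section Rho

variable {m p : ℕ} (h : p ≤ m) {r : Fin m}

lemma coe_rho_of_lt [NeZero p] (hr : (r : ℕ) < p) :
    (rho m p h r : ℕ) = (⟨r, hr⟩ - 1 : Fin p) := by
  rw [rho, extendDomain_apply_subtype (p := fun x : Fin m => (x : ℕ) < p) _ _ hr]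
  simp

lemma coe_rho_of_eq_zero (hp : 0 < p) (hr : (r : ℕ) = 0) : (rho m p h r : ℕ) = p - 1 := by
  obtain ⟨p, rfl⟩ := Nat.exists_eq_add_one_of_ne_zero hp.ne'
  rw [coe_rho_of_lt h (hr ▸ hp)]
  simp [hr]

lemma coe_rho_of_ne_zero (hr₀ : (r : ℕ) ≠ 0) (hr : (r : ℕ) < p) :
    (rho m p h r : ℕ) = r - 1 := by
  obtain ⟨p, rfl⟩ := Nat.exists_eq_add_one_of_ne_zero (Nat.ne_zero_of_lt hr)
  rw [coe_rho_of_lt h hr, Fin.val_sub_one_of_ne_zero (by simpa [Fin.ext_iff] using hr₀)]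

lemma rho_apply_of_le (hr : p ≤ r) : rho m p h r = r :=
  extendDomain_apply_not_subtype (p := fun x : Fin m => (x : ℕ) < p) _ _ hr.not_gt

end Rho

/-- The permutation of the `m` strands underlying the braid word
`(σ₁⋯σ_{p₁-1}) (σ₁⋯σ_{p₂-1}) ⋯` for a list `[p₁, p₂, …]` of numbers `≤ m`, the first factor acting
first; numbers `> m` contribute nothing. -/
def tlinkPerm (m : ℕ) (l : List ℕ) : Perm (Fin m) :=
  (l.map fun p => if h : p ≤ m then rho m p h else 1).reverse.prod

lemma tlinkPerm_append (m : ℕ) (l₁ l₂ : List ℕ) :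
    tlinkPerm m (l₁ ++ l₂) = tlinkPerm m l₂ * tlinkPerm m l₁ := by
  simp [tlinkPerm]

lemma tlinkPerm_replicate {m p : ℕ} (h : p ≤ m) (q : ℕ) :
    tlinkPerm m (List.replicate q p) = rho m p h ^ q := by
  simp [tlinkPerm, h]

lemma tlinkPerm_cons {m p : ℕ} (h : p ≤ m) (l : List ℕ) :
    tlinkPerm m (p :: l) = tlinkPerm m l * rho m p h := by
  simp [tlinkPerm, h]

lemma tlinkPerm_flatten (m : ℕ) (L : List (List ℕ)) :
    tlinkPerm m L.flatten = (L.map (tlinkPerm m)).reverse.prod := by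
  induction L with
  | nil => rfl
  | cons l L ih => simp [tlinkPerm_append, ih]

lemma foldl_trans_eq_prod_reverse {α : Type*} (l : List (Perm α)) :
    l.foldl Equiv.trans (Equiv.refl α) = l.reverse.prod := by
  rw [List.prod_eq_foldr, List.foldr_reverse]
  rfl

lemma foldl_trans_rho_pow_eq_tlinkPerm {m s : ℕ} (p q : Fin s → ℕ) (hp : ∀ j, p j ≤ m) :
    (List.ofFn fun j => rho m (p j) (hp j) ^ q j).foldl Equiv.trans (Equiv.refl _) =
      tlinkPerm m (List.ofFn fun j => List.replicate (q j) (p j)).flatten := by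
  rw [foldl_trans_eq_prod_reverse, tlinkPerm_flatten, List.map_ofFn]
  simp only [Function.comp_def, tlinkPerm_replicate (hp _)]

/- Read `g` as the first visit of a shuffle with Lorenz vector `l` to its right block. Then
`r ↦ i + r + #{d ∈ l | d ≤ r}` increasingly enumerates the values of the right block once the first
`i` left positions are removed, and removing the next one, whose displacement is `d`, replaces
position `i` by `i + d`, which relabels this enumeration by `ρ_d`. -/
lemma apply_add_tlinkPerm {m : ℕ} {γ : Type*} (g : ℕ → γ) {l : List ℕ} (hl : l.Pairwise (· ≤ ·))
    (hpos : ∀ d ∈ l, 0 < d) (hm : ∀ d ∈ l, d ≤ m) {i : ℕ}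
    (hg : ∀ (j : ℕ) (hj : j < l.length), g (i + j + l[j]) = g (i + j)) (r : Fin m) :
    g (i + l.length + tlinkPerm m l r) = g (i + r + l.countP (· ≤ (r : ℕ))) := by
  induction l generalizing i r with
  | nil => simp [tlinkPerm]
  | cons d l ih =>
    simp only [List.pairwise_cons, List.forall_mem_cons] at hl hpos hm
    have hg_head : g (i + d) = g i := hg 0 l.length.succ_pos
    have hg_tail (j : ℕ) (hj : j < l.length) : g (i + 1 + j + l[j]) = g (i + 1 + j) := by
      rw [add_right_comm i 1 j]
      exact hg (j + 1) (Nat.succ_lt_succ hj)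
    have hcount {t : ℕ} (ht : t < d) : l.countP (· ≤ t) = 0 :=
      List.countP_eq_zero.2 fun a ha => by simpa using ht.trans_le (hl.1 a ha)
    rw [tlinkPerm_cons hm.1, Perm.mul_apply, List.length_cons, add_comm _ 1, ← add_assoc,
      ih hl.2 hpos.2 hm.2 hg_tail, List.countP_cons]
    rcases le_or_gt d r with hdr | hrd
    · rw [rho_apply_of_le hm.1 hdr, if_pos (decide_eq_true hdr), add_right_comm i 1,
        add_right_comm (i + r), add_assoc (i + r)]
    rw [if_neg (by simpa using hrd), hcount hrd]
    by_cases hr : (r : ℕ) = 0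
    · rw [coe_rho_of_eq_zero hm.1 hpos.1 hr, hcount (Nat.sub_one_lt hpos.1.ne'), hr, add_assoc i,
        Nat.add_sub_cancel' hpos.1]
      exact hg_head
    · rw [coe_rho_of_ne_zero hm.1 hr hrd, hcount ((Nat.sub_le _ 1).trans_lt hrd), add_assoc i,
        Nat.add_sub_cancel' (Nat.one_le_iff_ne_zero.2 hr)]

end TLink

section FinList

lemma countP_ofFn {α : Type*} {n : ℕ} (f : Fin n → α) (p : α → Prop) [DecidablePred p] :
    (List.ofFn f).countP p = #{i | p (f i)} := by
  rw [← Multiset.coe_countP, ← Fin.univ_val_map, Multiset.countP_map]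
  rfl

lemma card_filter_apply_lt_le_iff {n : ℕ} {α : Type*} [LinearOrder α] {f : Fin n → α}
    (hf : StrictMono f) {a : α} {r : Fin n} (hr : a ≠ f r) :
    #{t | f t < a} ≤ (r : ℕ) ↔ a < f r := by
  constructor
  · contrapose!
    intro h
    have hsub : Iic r ⊆ ({t | f t < a} : Finset (Fin n)) := fun t ht => by
      simpa using (hf.monotone (mem_Iic.1 ht)).trans_lt (h.lt_of_ne hr.symm)
    simpa using card_le_card hsub
  · intro h
    have hsub : ({t | f t < a} : Finset (Fin n)) ⊆ Iio r := fun t ht =>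
      mem_Iio.2 <| hf.lt_iff_lt.1 <| (mem_filter.1 ht).2.trans h
    simpa using card_le_card hsub

lemma eq_flatten_ofFn_replicate_count {α : Type*} [LinearOrder α] {s : ℕ} {l : List α}
    (hl : l.SortedLE) {p : Fin s → α} (hp : StrictMono p) (hcover : ∀ d ∈ l, d ∈ Set.range p) :
    l = (List.ofFn fun j => List.replicate (l.count (p j)) (p j)).flatten := by
  refine List.Perm.eq_of_sortedLE hl ?_ ?_
  · rw [List.sortedLE_iff_pairwise, List.pairwise_flatten, List.pairwise_ofFn]
    refine ⟨?_, fun i j hij x hx y hy => ?_⟩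
    · simp [List.mem_ofFn, List.pairwise_replicate]
    · rw [List.eq_of_mem_replicate hx, List.eq_of_mem_replicate hy]
      exact hp.monotone hij.le
  · rw [List.perm_iff_count]
    intro a
    simp only [List.count_flatten, List.map_ofFn, List.sum_ofFn, Function.comp_def,
      List.count_replicate]
    by_cases ha : a ∈ Set.range p
    · obtain ⟨j, rfl⟩ := ha
      simp [hp.injective.eq_iff]
    · rw [List.count_eq_zero.2 (mt (hcover a) ha), sum_eq_zero]
      intro j _
      exact if_neg (by simpa using fun h => ha ⟨j, h⟩)

end FinList

section Shuffle

variable {k m : ℕ} {σ : Perm (Fin (k + m))}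

lemma castAdd_notMem_range_natAdd (i : Fin k) :
    Fin.castAdd m i ∉ Set.range (Fin.natAdd (m := m) k) := by
  simp [Fin.range_natAdd]

/-- The Lorenz vector `⟨σ(1) - 1, …, σ(k) - k⟩`; for a shuffle no subtraction truncates. -/
def lorenzVector (σ : Perm (Fin (k + m))) : List ℕ :=
  List.ofFn fun i : Fin k => (σ (Fin.castAdd m i) : ℕ) - i

lemma coe_apply_eq_card_add_card (σ : Perm (Fin (k + m))) (x : Fin (k + m)) :
    (σ x : ℕ) =
      #{i : Fin k | σ (Fin.castAdd m i) < σ x} + #{r : Fin m | σ (Fin.natAdd k r) < σ x} := by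
  simp only [card_filter]
  rw [← Fin.sum_univ_add fun y => if σ y < σ x then 1 else 0,
    Equiv.sum_comp σ fun z => if z < σ x then 1 else 0, ← card_filter, filter_gt_eq_Iio,
    Fin.card_Iio]

lemma coe_apply_castAdd (hL : StrictMono fun i => σ (Fin.castAdd m i)) (i : Fin k) :
    (σ (Fin.castAdd m i) : ℕ) = i + #{r : Fin m | σ (Fin.natAdd k r) < σ (Fin.castAdd m i)} := by
  rw [coe_apply_eq_card_add_card σ (Fin.castAdd m i)]
  simp only [hL.lt_iff_lt, filter_gt_eq_Iio, Fin.card_Iio]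

lemma lorenzVector_eq_ofFn_card (hL : StrictMono fun i => σ (Fin.castAdd m i)) :
    lorenzVector σ =
      List.ofFn fun i : Fin k => #{r : Fin m | σ (Fin.natAdd k r) < σ (Fin.castAdd m i)} := by
  refine congrArg List.ofFn (funext fun i => ?_)
  rw [coe_apply_castAdd hL, Nat.add_sub_cancel_left]

lemma castAdd_lt_apply (hL : StrictMono fun i => σ (Fin.castAdd m i)) {i : Fin k}
    (hi : σ (Fin.castAdd m i) ≠ Fin.castAdd m i) : Fin.castAdd m i < σ (Fin.castAdd m i) :=
  lt_of_le_of_ne (Fin.le_def.2 (Nat.le.intro (coe_apply_castAdd hL i).symm)) hi.symm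

lemma sortedLE_lorenzVector (hL : StrictMono fun i => σ (Fin.castAdd m i)) :
    (lorenzVector σ).SortedLE := by
  rw [lorenzVector_eq_ofFn_card hL, List.sortedLE_ofFn_iff]
  exact fun i j hij => card_le_card <| monotone_filter_right _ fun r _ hr =>
    hr.trans_le (hL.monotone hij)

lemma le_of_mem_lorenzVector (hL : StrictMono fun i => σ (Fin.castAdd m i)) {d : ℕ}
    (hd : d ∈ lorenzVector σ) : d ≤ m := by
  rw [lorenzVector_eq_ofFn_card hL, List.mem_ofFn] at hd
  obtain ⟨i, rfl⟩ := hd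
  simpa using card_filter_le (univ : Finset (Fin m)) _

lemma coe_apply_natAdd (hL : StrictMono fun i => σ (Fin.castAdd m i))
    (hR : StrictMono fun r => σ (Fin.natAdd k r)) (r : Fin m) :
    (σ (Fin.natAdd k r) : ℕ) = r + (lorenzVector σ).countP (· ≤ (r : ℕ)) := by
  have hne (i : Fin k) : σ (Fin.castAdd m i) ≠ σ (Fin.natAdd k r) := fun h =>
    castAdd_notMem_range_natAdd i ⟨r, (σ.injective h).symm⟩
  rw [coe_apply_eq_card_add_card σ (Fin.natAdd k r), lorenzVector_eq_ofFn_card hL, countP_ofFn,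
    add_comm]
  simp only [hR.lt_iff_lt, filter_gt_eq_Iio, Fin.card_Iio, card_filter_apply_lt_le_iff hR (hne _)]

lemma pos_of_mem_lorenzVector (hL : StrictMono fun i => σ (Fin.castAdd m i))
    (hfix : ∀ i : Fin k, σ (Fin.castAdd m i) ≠ Fin.castAdd m i) {d : ℕ}
    (hd : d ∈ lorenzVector σ) : 0 < d := by
  obtain ⟨i, rfl⟩ := List.mem_ofFn.1 hd
  exact Nat.sub_pos_of_lt (castAdd_lt_apply hL (hfix i))

lemma count_lorenzVector (d : ℕ) :
    (lorenzVector σ).count d = #{x : Fin (k + m) | (x : ℕ) < k ∧ (σ x : ℕ) - x = d} := by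
  simp only [List.count_eq_countP, lorenzVector, beq_eq_decide, countP_ofFn, card_filter]
  rw [Fin.sum_univ_add]
  simp

theorem natAdd_tlinkPerm_eq_firstVisit (hL : StrictMono fun i => σ (Fin.castAdd m i))
    (hR : StrictMono fun r => σ (Fin.natAdd k r))
    (hfix : ∀ i : Fin k, σ (Fin.castAdd m i) ≠ Fin.castAdd m i)
    (hvisit : ∀ x, ∃ j, σ^[j] x ∈ Set.range (Fin.natAdd (m := m) k)) (r : Fin m) :
    Fin.natAdd k (tlinkPerm m (lorenzVector σ) r) =
      firstVisit σ _ hvisit (σ (Fin.natAdd k r)) := by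
  have hF_natAdd (t : Fin m) := firstVisit_of_mem hvisit (Set.mem_range_self t)
  have hF {x} := firstVisit_apply_of_notMem hvisit (x := x)
  set F := firstVisit σ _ hvisit
  set g : ℕ → Fin (k + m) := Function.extend Fin.val F fun _ => Fin.natAdd k r
  have hg (x : Fin (k + m)) : g x = F x := Fin.val_injective.extend_apply F _ x
  have hlen : (lorenzVector σ).length = k := List.length_ofFn
  have hg_step (j : ℕ) (hj : j < (lorenzVector σ).length) :
      g (0 + j + (lorenzVector σ)[j]) = g (0 + j) := by
    set x : Fin (k + m) := Fin.castAdd m ⟨j, hlen ▸ hj⟩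
    have hxj : j + (lorenzVector σ)[j] = σ x := by
      rw [← Nat.add_sub_cancel' (castAdd_lt_apply hL (hfix ⟨j, hlen ▸ hj⟩)).le]
      simp [lorenzVector]
    rw [zero_add, hxj, hg, hF (castAdd_notMem_range_natAdd _)]
    exact (hg x).symm
  have hcount := apply_add_tlinkPerm g (sortedLE_lorenzVector hL).pairwise
    (fun _ => pos_of_mem_lorenzVector hL hfix) (fun _ => le_of_mem_lorenzVector hL) hg_step r
  rw [zero_add, zero_add, ← coe_apply_natAdd hL hR, hlen, hg] at hcount
  rw [← hcount, ← Fin.val_natAdd, hg, hF_natAdd]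

theorem numOrbits_eq_numOrbits_tlinkPerm (hL : StrictMono fun i => σ (Fin.castAdd m i))
    (hR : StrictMono fun r => σ (Fin.natAdd k r))
    (hfix : ∀ i : Fin k, σ (Fin.castAdd m i) ≠ Fin.castAdd m i) :
    numOrbits σ = numOrbits (tlinkPerm m (lorenzVector σ)) := by
  have hlt : ∀ x ∉ Set.range (Fin.natAdd (m := m) k), x < σ x := fun x => by
    refine Fin.addCases (fun i _ => castAdd_lt_apply hL (hfix i)) (fun r h => ?_) x
    exact absurd ⟨r, rfl⟩ h
  rw [numOrbits_eq_card_quotient, numOrbits_eq_card_quotient]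
  exact card_quotient_eq_of_firstVisit (Fin.natAdd_injective m k)
    (exists_iterate_mem_of_lt_apply hlt) (natAdd_tlinkPerm_eq_firstVisit hL hR hfix _)

end Shuffle

/-- Birman–Kofman correspondence on the level of components: if `σ` is a
fixed-point-free shuffle with Lorenz vector `⟨p₁^{q₁}, …, p_s^{q_s}⟩`
(`p₁ < … < p_s = n - k`), then `σ` acting on `{1,…,n}` and
`τ = ρ_{p₁}^{q₁} ∘ ρ_{p₂}^{q₂} ∘ ⋯ ∘ ρ_{p_s}^{q_s}` acting on `{1,…,p_s}` have the
same number of orbits: the Lorenz link of `σ` and the T-link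
`T((p₁,q₁),…,(p_s,q_s))` have the same number of components. Here `τ` is the
underlying permutation of the T-braid word
`(σ₁⋯σ_{p₁-1})^{q₁} ⋯ (σ₁⋯σ_{p_s-1})^{q_s}`, whose factors compose in braid-word
order (the leftmost factor `ρ_{p₁}^{q₁}` acts on the strands first); this
left-to-right composition is encoded by folding with `Equiv.trans`. -/
theorem numOrbits_lorenz_eq_numOrbits_tlink {n k s : ℕ} (hn : 2 ≤ n) (hs : 1 ≤ s)
    (σ : Equiv.Perm (Fin n)) (hσ : IsShuffle k σ) (hfpf : FixedPointFree σ)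
    (p q : Fin s → ℕ) (hp : StrictMono p) (hq : ∀ j, 1 ≤ q j)
    (hsum : ∑ j, q j = k)
    (hcount : ∀ j, (Finset.univ.filter fun i : Fin n =>
        (i : ℕ) < k ∧ (σ i : ℕ) - (i : ℕ) = p j).card = q j)
    (hcover : ∀ i : Fin n, (i : ℕ) < k → ∃ j, (σ i : ℕ) - (i : ℕ) = p j)
    (hlast : p ⟨s - 1, by omega⟩ = n - k) :
    numOrbits σ =
      numOrbits ((List.ofFn fun j : Fin s =>
          ((rho (p ⟨s - 1, by omega⟩) (p j)
            (hp.monotone (by rw [Fin.le_def]; show (j : ℕ) ≤ s - 1; omega))) ^ (q j)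
            : Equiv.Perm (Fin (p ⟨s - 1, by omega⟩)))).foldl
        Equiv.trans (Equiv.refl _)) := by
  have hp_le (j : Fin s) : p j ≤ p ⟨s - 1, by omega⟩ :=
    hp.monotone (Fin.le_def.2 (Nat.le_sub_one_of_lt j.isLt))
  obtain ⟨-, hkn, hL, hR⟩ := hσ
  obtain rfl : n = k + p ⟨s - 1, Nat.sub_one_lt_of_lt hs⟩ := by omega
  replace hL : StrictMono fun i => σ (Fin.castAdd _ i) := fun i j hij =>
    hL _ _ hij j.isLt
  replace hR : StrictMono fun r => σ (Fin.natAdd k r) := fun r t hrt =>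
    hR _ _ (Nat.add_lt_add_left hrt k) (Nat.le_add_right k r)
  have hblocks := eq_flatten_ofFn_replicate_count (sortedLE_lorenzVector hL) hp fun d hd => by
    obtain ⟨i, rfl⟩ := List.mem_ofFn.1 hd
    exact (hcover (Fin.castAdd _ i) i.isLt).imp fun _ => Eq.symm
  simp only [count_lorenzVector, hcount] at hblocks
  rw [foldl_trans_rho_pow_eq_tlinkPerm p q hp_le, ← hblocks]
  exact numOrbits_eq_numOrbits_tlinkPerm hL hR fun i => hfpf _
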